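/- There exist constants γ₀ > 0 and ε₁ > 0, depending only on C₀, n and d, such that the following holds for every fixed α > γ₀. For a cube Q write δ(Q, ℝ^d) := ∫_{ℝ^d ∖ Q} |x−z_Q|^{-n} dμ(x). If R₀ is a cube centered at a point of supp(μ) with δ(R₀, ℝ^d) > α, then there exists a (2,2^{d+1})-doubling cube S ⊃ R₀ concentric with R₀, with ℓ(S) ≥ 2 ℓ(R₀), satisfying |δ(R₀, S) − α| ≤ ε₁; here ε₁ does not depend on α. -/

import Mathlib

open MeasureTheory Metric Set Filter
open scoped ENNReal NNReal

noncomputable section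

/-- The ambient Euclidean space `ℝ^d`. -/
abbrev Euc (d : ℕ) := EuclideanSpace ℝ (Fin d)

/-- A closed axis-parallel cube in `ℝ^d`, given by its center and side length. -/
structure Cube (d : ℕ) where
  center : Euc d
  side : ℝ

namespace Cube

variable {d : ℕ}

/-- The set of points of the cube. -/
def toSet (Q : Cube d) : Set (Euc d) := {x | ∀ i, |x i - Q.center i| ≤ Q.side / 2}

/-- The concentric dilation `ρQ`. -/
def dilate (Q : Cube d) (ρ : ℝ) : Cube d := ⟨Q.center, ρ * Q.side⟩

/-- `Q.encl R` is the smallest cube concentric with `Q` containing `Q ∪ R`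
(denoted `Q_R` in the paper). -/
def encl (Q R : Cube d) : Cube d :=
  ⟨Q.center, max Q.side (⨆ i, 2 * |R.center i - Q.center i| + R.side)⟩

end Cube

variable {d : ℕ}

/-- The support of a measure: the points all of whose neighbourhoods have positive
measure. -/
def msupport (μ : Measure (Euc d)) : Set (Euc d) := {x | ∀ r > 0, 0 < μ (ball x r)}

/-- A cube of the lattice: positive side length and centered at a point of `supp μ`. -/
def IsCube (μ : Measure (Euc d)) (Q : Cube d) : Prop :=
  Q.center ∈ msupport μ ∧ 0 < Q.side

/-- The growth condition `μ(B(x,r)) ≤ C₀ rⁿ` for all `x ∈ supp μ`, `r > 0`. -/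
def GrowthCond (μ : Measure (Euc d)) (C₀ n : ℝ) : Prop :=
  ∀ x ∈ msupport μ, ∀ r : ℝ, 0 < r → μ (ball x r) ≤ ENNReal.ofReal (C₀ * r ^ n)

/-- The coefficient `δ(Q,R)`. -/
def cdelta (μ : Measure (Euc d)) (n : ℝ) (Q R : Cube d) : ℝ :=
  max (∫ x in (Q.encl R).toSet \ Q.toSet, ‖x - Q.center‖ ^ (-n) ∂μ)
      (∫ x in (R.encl Q).toSet \ R.toSet, ‖x - R.center‖ ^ (-n) ∂μ)

/-- An `(α,β)`-doubling cube: `μ(αQ) ≤ β μ(Q)`. -/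
def IsDoublingWith (μ : Measure (Euc d)) (α β : ℝ) (Q : Cube d) : Prop :=
  μ (Q.dilate α).toSet ≤ ENNReal.ofReal β * μ Q.toSet

/-- A `(2,2^(d+1))`-doubling cube. -/
def IsDoubling (μ : Measure (Euc d)) (Q : Cube d) : Prop :=
  μ (Q.dilate 2).toSet ≤ 2 ^ (d + 1) * μ Q.toSet

/-- An `n`-dimensional Calderón–Zygmund kernel with size constant `C₁`,
regularity constant `C₂` and regularity exponent `δ`. -/
structure IsCZKernel (d : ℕ) (n C₁ C₂ δ : ℝ) (k : Euc d → Euc d → ℝ) : Prop where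
  measurable : Measurable (Function.uncurry k)
  size : ∀ x y, x ≠ y → |k x y| ≤ C₁ / ‖x - y‖ ^ n
  reg : ∀ x x' y : Euc d, ‖x - x'‖ ≤ ‖x - y‖ / 2 →
    |k x y - k x' y| + |k y x - k y x'| ≤ C₂ * ‖x - x'‖ ^ δ / ‖x - y‖ ^ (n + δ)

/-- The truncated operator `T_ε`. -/
def trunc (μ : Measure (Euc d)) (k : Euc d → Euc d → ℝ) (ε : ℝ) (f : Euc d → ℝ)
    (x : Euc d) : ℝ :=
  ∫ y in {y | ε < dist x y}, k x y * f y ∂μ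

/-- `T_ε χ_Q`, the truncated operator applied to the characteristic function of a
cube `Q`. -/
def truncCube (μ : Measure (Euc d)) (k : Euc d → Euc d → ℝ) (ε : ℝ) (Q : Cube d)
    (x : Euc d) : ℝ :=
  ∫ y in {y | ε < dist x y} ∩ Q.toSet, k x y ∂μ

/-- The function representing `T_ε(1)` modulo additive constants, relative to a
base point `x₀`. -/
def truncOne (μ : Measure (Euc d)) (k : Euc d → Euc d → ℝ) (x₀ : Euc d) (ε : ℝ)
    (x : Euc d) : ℝ :=
  ∫ y, ({y | ε < dist x y}.indicator (fun z => k x z) y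
      - {y | ε < dist x₀ y}.indicator (fun z => k x₀ z) y) ∂μ

/-- `f ∈ BMO_ρ(μ)` with constant `C`. -/
def BMOWith (μ : Measure (Euc d)) (ρ C : ℝ) (f : Euc d → ℝ) : Prop :=
  ∀ Q : Cube d, IsCube μ Q →
    ∫ x in Q.toSet, |f x - ⨍ y in Q.toSet, f y ∂μ| ∂μ ≤ C * (μ (Q.dilate ρ).toSet).toReal

/-- `f ∈ RBMO(μ)` with constant `C`. -/
def RBMOWith (μ : Measure (Euc d)) (n C : ℝ) (f : Euc d → ℝ) : Prop :=
  (∀ Q : Cube d, IsCube μ Q → IsDoubling μ Q →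
    ∫ x in Q.toSet, |f x - ⨍ y in Q.toSet, f y ∂μ| ∂μ ≤ C * (μ Q.toSet).toReal) ∧
  (∀ Q R : Cube d, IsCube μ Q → IsCube μ R → IsDoubling μ Q → IsDoubling μ R →
    Q.toSet ⊆ R.toSet →
    |(⨍ x in Q.toSet, f x ∂μ) - ⨍ x in R.toSet, f x ∂μ| ≤ C * (1 + cdelta μ n Q R))

/-- The distance between two sets. -/
def setDist (s t : Set (Euc d)) : ℝ := sInf (Set.image2 dist s t)

/-- `δ(x, R)` for a point `x`, defined through the smallest cube centered at `x`
containing `R`; with values in `[0,∞]`. -/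
def deltaPt (μ : Measure (Euc d)) (n : ℝ) (x : Euc d) (R : Cube d) : ℝ≥0∞ :=
  ∫⁻ y in ((Cube.mk x 0).encl R).toSet \ {x}, ENNReal.ofReal (‖y - x‖ ^ (-n)) ∂μ

/-- `δ(Q, ℝ^d)`, with values in `[0,∞]`. -/
def deltaFull (μ : Measure (Euc d)) (n : ℝ) (Q : Cube d) : ℝ≥0∞ :=
  ∫⁻ x in Q.toSetᶜ, ENNReal.ofReal (‖x - Q.center‖ ^ (-n)) ∂μ

/-- The integral operator with kernel `s`. -/
def Sop (μ : Measure (Euc d)) (s : Euc d → Euc d → ℝ) (f : Euc d → ℝ) (x : Euc d) : ℝ :=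
  ∫ y, s x y * f y ∂μ

/-- The difference operators `D_k = S_k - S_{k-1}`. -/
def Dop (μ : Measure (Euc d)) (s : ℤ → Euc d → Euc d → ℝ) (j : ℤ) (f : Euc d → ℝ) :
    Euc d → ℝ :=
  fun x => Sop μ (s j) f x - Sop μ (s (j - 1)) f x

/-! Write `Θ(Q) = μ(Q) / ℓ(Q)ⁿ`, and let `Q_j = ρʲ R₀` and `F j = δ(R₀, Q_j)`. Passing from `Q_j` to
`Q_{j+1}` increases `F` by at most a multiple of `Θ(Q_{j+1})`, which is bounded by the growth
condition, while `F` eventually exceeds `α`. If `Q_j` fails to be `(ρ, β)`-doubling with `β > ρⁿ`,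
then `Θ(Q_{j+1}) ≥ (β / ρⁿ) Θ(Q_j)`. Hence along a run of non-doubling cubes the increments of `F`
grow geometrically, and their sum is comparable to the last one. So going back from the first `j`
with `F j > α` to the last doubling cube before it costs only a bounded amount. -/

section IncrementalSequence

variable {F b : ℕ → ℝ} {q : ℝ}

theorem le_add_mul_of_geometric_growth (hq : 1 < q) (hb : ∀ j, 0 ≤ b j)
    (hF : ∀ j, F (j + 1) ≤ F j + b (j + 1)) {i k : ℕ} (hik : i ≤ k)
    (hgrow : ∀ j, i < j → j < k → q * b j ≤ b (j + 1)) :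
    F k ≤ F i + q / (q - 1) * b k := by
  have hq₁ : 0 < q - 1 := sub_pos.2 hq
  induction k, hik using Nat.le_induction with
  | base => exact le_add_of_nonneg_right (mul_nonneg (by positivity) (hb i))
  | succ k hik ih =>
    have hsum : q / (q - 1) * b (k + 1) = b (k + 1) / (q - 1) + b (k + 1) := by
      field_simp
      ring
    rcases hik.eq_or_lt with rfl | hlt
    · have := div_nonneg (hb (i + 1)) hq₁.le
      linarith [hF i]
    · have hlast : q / (q - 1) * b k ≤ b (k + 1) / (q - 1) := by
        rw [div_mul_eq_mul_div]
        gcongr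
        exact hgrow k hlt k.lt_succ_self
      linarith [hF k, ih fun j hij hjk => hgrow j hij (hjk.trans k.lt_succ_self)]

theorem exists_ne_zero_mem_Icc_of_geometric_growth {P : ℕ → Prop} {K α : ℝ} (hq : 1 < q)
    (hb : ∀ j, 0 ≤ b j) (hbK : ∀ j, b j ≤ K) (hF : ∀ j, F (j + 1) ≤ F j + b (j + 1))
    (hgrow : ∀ j, ¬ P j → q * b j ≤ b (j + 1)) (hα : F 0 + q / (q - 1) * K ≤ α)
    (hlarge : ∃ j, α < F j) :
    ∃ j ≠ 0, P j ∧ F j ∈ Icc (α - q / (q - 1) * K) α := by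
  classical
  have hq₀ : 0 ≤ q / (q - 1) := div_nonneg (by linarith) (by linarith)
  have hK : 0 ≤ K := (hb 0).trans (hbK 0)
  set k := Nat.find hlarge
  have hk : α < F k := Nat.find_spec hlarge
  have hk₀ : k ≠ 0 := by
    intro h
    rw [h] at hk
    linarith [mul_nonneg hq₀ hK]
  set i := Nat.findGreatest P (k - 1) with hi
  have hik : i < k := by
    have := Nat.findGreatest_le (P := P) (k - 1)
    omega
  have hlower : α - q / (q - 1) * K < F i := by
    have hrun : F k ≤ F i + q / (q - 1) * b k :=
      le_add_mul_of_geometric_growth hq hb hF hik.le fun j hij hjk =>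
        hgrow j (Nat.findGreatest_is_greatest hij (by omega))
    linarith [mul_le_mul_of_nonneg_left (hbK k) hq₀]
  have hi₀ : i ≠ 0 := by
    intro h
    rw [h] at hlower
    linarith
  exact ⟨i, hi₀, Nat.findGreatest_of_ne_zero hi.symm hi₀, hlower.le,
    not_lt.1 (Nat.find_min hlarge hik)⟩

end IncrementalSequence

namespace Cube

theorem measurableSet_toSet (Q : Cube d) : MeasurableSet Q.toSet := by
  simp only [toSet, ofPred_forall]
  exact .iInter fun i => (isClosed_le (by fun_prop) (by fun_prop)).measurableSet

theorem abs_sub_center_apply_le (Q : Cube d) (x : Euc d) (i : Fin d) :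
    |x i - Q.center i| ≤ ‖x - Q.center‖ :=
  PiLp.norm_apply_le (x - Q.center) i

theorem half_side_lt_norm_of_notMem_toSet {Q : Cube d} {x : Euc d} (hx : x ∉ Q.toSet) :
    Q.side / 2 < ‖x - Q.center‖ := by
  contrapose! hx
  exact fun i => (Q.abs_sub_center_apply_le x i).trans hx

theorem toSet_subset_ball {Q : Cube d} (hQ : 0 < Q.side) :
    Q.toSet ⊆ ball Q.center ((d + 1) * Q.side) := by
  intro x hx
  have hnorm : ‖x - Q.center‖ ^ 2 ≤ d * (Q.side / 2) ^ 2 := by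
    rw [EuclideanSpace.norm_sq_eq]
    calc ∑ i, ‖(x - Q.center) i‖ ^ 2 ≤ ∑ _i : Fin d, (Q.side / 2) ^ 2 := by
          gcongr with i
          exact hx i
      _ = d * (Q.side / 2) ^ 2 := by simp
  rw [mem_ball, dist_eq_norm]
  refine lt_of_pow_lt_pow_left₀ 2 (by positivity) (hnorm.trans_lt ?_)
  have hd : (d : ℝ) / 4 < (d + 1) ^ 2 := by nlinarith [d.cast_nonneg (α := ℝ)]
  calc d * (Q.side / 2) ^ 2 = d / 4 * Q.side ^ 2 := by ring
    _ < (d + 1) ^ 2 * Q.side ^ 2 := by gcongr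
    _ = ((d + 1) * Q.side) ^ 2 := by ring

theorem toSet_subset_toSet {Q R : Cube d} (hc : R.center = Q.center) (hs : Q.side ≤ R.side) :
    Q.toSet ⊆ R.toSet := by
  intro x hx i
  rw [hc]
  exact (hx i).trans (by linarith)

theorem dilate_dilate (Q : Cube d) (ρ σ : ℝ) : (Q.dilate ρ).dilate σ = Q.dilate (σ * ρ) := by
  simp only [dilate, mul_assoc]

theorem dilate_one (Q : Cube d) : Q.dilate 1 = Q := by
  simp only [dilate, one_mul]

theorem iUnion_toSet_dilate_pow {Q : Cube d} {ρ : ℝ} (hρ : 1 < ρ) (hQ : 0 < Q.side) :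
    ⋃ j : ℕ, (Q.dilate (ρ ^ j)).toSet = univ := by
  refine eq_univ_of_forall fun x => mem_iUnion.2 ?_
  obtain ⟨j, hj⟩ := pow_unbounded_of_one_lt (2 * ‖x - Q.center‖ / Q.side) hρ
  rw [div_lt_iff₀ hQ] at hj
  refine ⟨j, fun i => (Q.abs_sub_center_apply_le x i).trans ?_⟩
  simp only [dilate]
  linarith

theorem monotone_toSet_dilate_pow {Q : Cube d} {ρ : ℝ} (hρ : 1 ≤ ρ) (hQ : 0 ≤ Q.side) :
    Monotone fun j : ℕ => (Q.dilate (ρ ^ j)).toSet := fun _ _ hij =>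
  toSet_subset_toSet rfl (mul_le_mul_of_nonneg_right (pow_le_pow_right₀ hρ hij) hQ)

theorem encl_eq_right [NeZero d] {Q R : Cube d} (hc : R.center = Q.center)
    (hs : Q.side ≤ R.side) : Q.encl R = R := by
  simp [encl, ← hc, hs]

theorem encl_eq_left [NeZero d] {Q R : Cube d} (hc : R.center = Q.center)
    (hs : R.side ≤ Q.side) : Q.encl R = Q := by
  simp [encl, hc, hs]

end Cube

theorem isDoubling_iff_isDoublingWith {μ : Measure (Euc d)} {Q : Cube d} :
    IsDoubling μ Q ↔ IsDoublingWith μ 2 (2 ^ (d + 1)) Q := by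
  simp [IsDoubling, IsDoublingWith, ENNReal.ofReal_pow]

section Density

variable {μ : Measure (Euc d)} {n C₀ ρ β : ℝ} {Q : Cube d}

/-- The `n`-dimensional density `Θ(Q) = μ(Q) / ℓ(Q)ⁿ` of a cube. It is real-valued, hence
meaningful only when `μ(Q) < ∞`. -/
def cubeDensity (μ : Measure (Euc d)) (n : ℝ) (Q : Cube d) : ℝ := μ.real Q.toSet / Q.side ^ n

theorem cubeDensity_nonneg (hQ : 0 ≤ Q.side) : 0 ≤ cubeDensity μ n Q := by
  unfold cubeDensity
  positivity

theorem measure_toSet_le (hQ : 0 < Q.side)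
    (hμ : ∀ r, 0 < r → μ (ball Q.center r) ≤ ENNReal.ofReal (C₀ * r ^ n)) :
    μ Q.toSet ≤ ENNReal.ofReal (|C₀| * ((d + 1) * Q.side) ^ n) :=
  calc μ Q.toSet ≤ μ (ball Q.center ((d + 1) * Q.side)) := measure_mono (Q.toSet_subset_ball hQ)
    _ ≤ ENNReal.ofReal (C₀ * ((d + 1) * Q.side) ^ n) := hμ _ (by positivity)
    _ ≤ ENNReal.ofReal (|C₀| * ((d + 1) * Q.side) ^ n) := by
      gcongr
      exact le_abs_self C₀

theorem cubeDensity_le (hQ : 0 < Q.side)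
    (hμ : ∀ r, 0 < r → μ (ball Q.center r) ≤ ENNReal.ofReal (C₀ * r ^ n)) :
    cubeDensity μ n Q ≤ |C₀| * (d + 1) ^ n := by
  rw [cubeDensity, div_le_iff₀ (by positivity), mul_assoc,
    ← Real.mul_rpow (by positivity) hQ.le]
  exact ENNReal.toReal_le_of_le_ofReal (by positivity) (measure_toSet_le hQ hμ)

theorem mul_cubeDensity_le_cubeDensity_dilate (hρ : 0 ≤ ρ) (hQ : 0 ≤ Q.side)
    (hfin : μ (Q.dilate ρ).toSet ≠ ∞) (hnd : ¬ IsDoublingWith μ ρ β Q) :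
    β / ρ ^ n * cubeDensity μ n Q ≤ cubeDensity μ n (Q.dilate ρ) := by
  have hmeas : β * μ.real Q.toSet ≤ μ.real (Q.dilate ρ).toSet :=
    calc β * μ.real Q.toSet ≤ (ENNReal.ofReal β * μ Q.toSet).toReal := by
          rw [ENNReal.toReal_mul, ENNReal.toReal_ofReal']
          exact mul_le_mul_of_nonneg_right (le_max_left β 0) measureReal_nonneg
      _ ≤ μ.real (Q.dilate ρ).toSet := ENNReal.toReal_mono hfin (not_le.1 hnd).le
  calc β / ρ ^ n * cubeDensity μ n Q = β * μ.real Q.toSet / (ρ * Q.side) ^ n := by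
        rw [cubeDensity, div_mul_div_comm, Real.mul_rpow hρ hQ]
    _ ≤ cubeDensity μ n (Q.dilate ρ) :=
      div_le_div_of_nonneg_right hmeas (Real.rpow_nonneg (mul_nonneg hρ hQ) n)

end Density

section ExtendedDelta

variable {μ : Measure (Euc d)} {n ρ : ℝ} {P Q R : Cube d}

/-- The `[0,∞]`-valued version of `δ(Q,R)` for concentric cubes `Q ⊆ R`, in which case `Q_R = R` and
`R_Q = R`. -/
def edelta (μ : Measure (Euc d)) (n : ℝ) (Q R : Cube d) : ℝ≥0∞ :=
  ∫⁻ x in R.toSet \ Q.toSet, ENNReal.ofReal (‖x - Q.center‖ ^ (-n)) ∂μ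

theorem edelta_self : edelta μ n Q Q = 0 := by
  simp [edelta]

theorem cdelta_eq_toReal_edelta [NeZero d] (hc : R.center = Q.center) (hs : Q.side ≤ R.side) :
    cdelta μ n Q R = (edelta μ n Q R).toReal := by
  have hmeas : Measurable fun x : Euc d => ‖x - Q.center‖ ^ (-n) := by fun_prop
  rw [cdelta, Cube.encl_eq_right hc hs, Cube.encl_eq_left hc.symm hs, Set.sdiff_self,
    setIntegral_empty, max_eq_left (integral_nonneg fun x => by positivity), edelta,
    integral_eq_lintegral_of_nonneg_ae (.of_forall fun x => by positivity)
      hmeas.aestronglyMeasurable]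

theorem edelta_triangle (hc : Q.center = P.center) :
    edelta μ n P R ≤ edelta μ n P Q + edelta μ n Q R := by
  simp only [edelta, hc]
  rw [add_comm]
  exact (lintegral_mono_set (sdiff_triangle _ Q.toSet _)).trans (lintegral_union_le _ _ _)

theorem edelta_le (hn : 0 ≤ n) (hQ : 0 < Q.side) :
    edelta μ n Q R ≤ ENNReal.ofReal ((Q.side / 2) ^ (-n)) * μ R.toSet :=
  calc edelta μ n Q R
      ≤ ∫⁻ _ in R.toSet \ Q.toSet, ENNReal.ofReal ((Q.side / 2) ^ (-n)) ∂μ :=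
        setLIntegral_mono' (R.measurableSet_toSet.diff Q.measurableSet_toSet) fun x hx =>
          ENNReal.ofReal_le_ofReal <| Real.rpow_le_rpow_of_nonpos (half_pos hQ)
            (Cube.half_side_lt_norm_of_notMem_toSet hx.2).le (neg_nonpos.2 hn)
    _ ≤ ENNReal.ofReal ((Q.side / 2) ^ (-n)) * μ R.toSet := by
      rw [setLIntegral_const]
      gcongr
      exact sdiff_subset

theorem edelta_ne_top (hn : 0 ≤ n) (hQ : 0 < Q.side) (hfin : μ R.toSet ≠ ∞) :
    edelta μ n Q R ≠ ∞ :=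
  ne_top_of_le_ne_top (ENNReal.mul_ne_top ENNReal.ofReal_ne_top hfin) (edelta_le hn hQ)

theorem toReal_edelta_dilate_le (hn : 0 ≤ n) (hρ : 0 < ρ) (hQ : 0 < Q.side)
    (hfin : μ (Q.dilate ρ).toSet ≠ ∞) :
    (edelta μ n Q (Q.dilate ρ)).toReal ≤ (2 * ρ) ^ n * cubeDensity μ n (Q.dilate ρ) :=
  calc (edelta μ n Q (Q.dilate ρ)).toReal
      ≤ (ENNReal.ofReal ((Q.side / 2) ^ (-n)) * μ (Q.dilate ρ).toSet).toReal :=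
        ENNReal.toReal_mono (ENNReal.mul_ne_top ENNReal.ofReal_ne_top hfin) (edelta_le hn hQ)
    _ = (Q.side / 2) ^ (-n) * μ.real (Q.dilate ρ).toSet := by
      rw [ENNReal.toReal_mul, ENNReal.toReal_ofReal (by positivity), Measure.real]
    _ = (2 * ρ) ^ n * cubeDensity μ n (Q.dilate ρ) := by
      have hside : (Q.dilate ρ).side = 2 * ρ * (Q.side / 2) := by
        simp only [Cube.dilate]
        ring
      rw [cubeDensity, hside, Real.mul_rpow (x := 2 * ρ) (by positivity) (by positivity),
        Real.rpow_neg (by positivity), ← mul_div_assoc,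
        mul_div_mul_left _ _ (by positivity), inv_mul_eq_div]

theorem toReal_edelta_dilate_le_add (hn : 0 ≤ n) (hρ : 0 < ρ) (hP : 0 < P.side) (hQ : 0 < Q.side)
    (hc : Q.center = P.center) (hfinQ : μ Q.toSet ≠ ∞) (hfin : μ (Q.dilate ρ).toSet ≠ ∞) :
    (edelta μ n P (Q.dilate ρ)).toReal ≤
      (edelta μ n P Q).toReal + (2 * ρ) ^ n * cubeDensity μ n (Q.dilate ρ) :=
  (ENNReal.toReal_le_add (edelta_triangle hc) (edelta_ne_top hn hP hfinQ)
    (edelta_ne_top hn hQ hfin)).trans (add_le_add le_rfl (toReal_edelta_dilate_le hn hρ hQ hfin))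

theorem deltaFull_eq_iSup_edelta_dilate_pow (hρ : 1 < ρ) (hQ : 0 < Q.side) :
    deltaFull μ n Q = ⨆ j : ℕ, edelta μ n Q (Q.dilate (ρ ^ j)) := by
  have hmono : Monotone fun j : ℕ => (Q.dilate (ρ ^ j)).toSet \ Q.toSet := fun _ _ hij =>
    sdiff_subset_sdiff_left (Cube.monotone_toSet_dilate_pow hρ.le hQ.le hij)
  rw [deltaFull, compl_eq_univ_sdiff, ← Cube.iUnion_toSet_dilate_pow hρ hQ, iUnion_sdiff,
    setLIntegral_iUnion_of_directed _ hmono.directed_le]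
  rfl

theorem exists_lt_toReal_edelta_dilate_pow {α : ℝ} (hn : 0 ≤ n) (hρ : 1 < ρ) (hQ : 0 < Q.side)
    (hfin : ∀ j : ℕ, μ (Q.dilate (ρ ^ j)).toSet ≠ ∞)
    (hδ : ENNReal.ofReal α < deltaFull μ n Q) :
    ∃ j : ℕ, α < (edelta μ n Q (Q.dilate (ρ ^ j))).toReal := by
  rw [deltaFull_eq_iSup_edelta_dilate_pow hρ hQ, lt_iSup_iff] at hδ
  refine hδ.imp fun j hj => ?_
  rw [← ENNReal.ofReal_toReal (edelta_ne_top hn hQ (hfin j))] at hj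
  exact (ENNReal.ofReal_lt_ofReal_iff'.1 hj).1

end ExtendedDelta

theorem exists_dilate_pow_isDoublingWith_edelta_mem_Icc {μ : Measure (Euc d)} {n C₀ ρ β α : ℝ}
    {R : Cube d} (hn : 0 ≤ n) (hρ : 1 < ρ) (hβ : ρ ^ n < β) (hR : 0 < R.side)
    (hμ : ∀ r, 0 < r → μ (ball R.center r) ≤ ENNReal.ofReal (C₀ * r ^ n))
    (hα : β / (β - ρ ^ n) * ((2 * ρ) ^ n * (|C₀| * (d + 1) ^ n)) ≤ α)
    (hδ : ENNReal.ofReal α < deltaFull μ n R) :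
    ∃ j ≠ 0, IsDoublingWith μ ρ β (R.dilate (ρ ^ j)) ∧
      (edelta μ n R (R.dilate (ρ ^ j))).toReal ∈
        Icc (α - β / (β - ρ ^ n) * ((2 * ρ) ^ n * (|C₀| * (d + 1) ^ n))) α := by
  have hρ₀ : 0 < ρ := one_pos.trans hρ
  have hρn : 0 < ρ ^ n := Real.rpow_pos_of_pos hρ₀ n
  have hside (j : ℕ) : 0 < (R.dilate (ρ ^ j)).side := mul_pos (pow_pos hρ₀ j) hR
  have hsucc (j : ℕ) : R.dilate (ρ ^ (j + 1)) = (R.dilate (ρ ^ j)).dilate ρ := by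
    rw [Cube.dilate_dilate, pow_succ']
  have hfin (j : ℕ) : μ (R.dilate (ρ ^ j)).toSet ≠ ∞ :=
    ((measure_toSet_le (hside j) hμ).trans_lt ENNReal.ofReal_lt_top).ne
  have hstep (j : ℕ) : (edelta μ n R (R.dilate (ρ ^ (j + 1)))).toReal ≤
      (edelta μ n R (R.dilate (ρ ^ j))).toReal +
        (2 * ρ) ^ n * cubeDensity μ n (R.dilate (ρ ^ (j + 1))) := by
    rw [hsucc]
    exact toReal_edelta_dilate_le_add hn hρ₀ hR (hside j) rfl (hfin j) (hsucc j ▸ hfin (j + 1))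
  have hgrow (j : ℕ) (hj : ¬ IsDoublingWith μ ρ β (R.dilate (ρ ^ j))) :
      β / ρ ^ n * ((2 * ρ) ^ n * cubeDensity μ n (R.dilate (ρ ^ j))) ≤
        (2 * ρ) ^ n * cubeDensity μ n (R.dilate (ρ ^ (j + 1))) := by
    rw [mul_left_comm, hsucc]
    gcongr
    exact mul_cubeDensity_le_cubeDensity_dilate hρ₀.le (hside j).le (hsucc j ▸ hfin (j + 1)) hj
  have hratio : β / ρ ^ n / (β / ρ ^ n - 1) = β / (β - ρ ^ n) := by
    field_simp
  rw [← hratio] at hα ⊢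
  refine exists_ne_zero_mem_Icc_of_geometric_growth ((one_lt_div hρn).2 hβ)
    (fun j => mul_nonneg (by positivity) (cubeDensity_nonneg (hside j).le)) (fun j => ?_) hstep
    hgrow (by simpa [Cube.dilate_one, edelta_self] using hα)
    (exists_lt_toReal_edelta_dilate_pow hn hρ hR hfin hδ)
  gcongr
  exact cubeDensity_le (hside j) hμ

theorem exists_big_doubling_cube_prescribed_delta_general [NeZero d] (n C₀ ρ β : ℝ)
    (hn : 0 ≤ n) (hρ : 1 < ρ) (hβ : ρ ^ n < β) :
    ∃ γ₀ ε₁ : ℝ, 0 < γ₀ ∧ 0 < ε₁ ∧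
      ∀ (μ : Measure (Euc d)) (R₀ : Cube d), 0 < R₀.side →
      (∀ r : ℝ, 0 < r → μ (ball R₀.center r) ≤ ENNReal.ofReal (C₀ * r ^ n)) →
      ∀ α : ℝ, γ₀ < α → ENNReal.ofReal α < deltaFull μ n R₀ →
        ∃ S : Cube d, S.center = R₀.center ∧ R₀.toSet ⊆ S.toSet ∧
          ρ * R₀.side ≤ S.side ∧ IsDoublingWith μ ρ β S ∧ |cdelta μ n R₀ S - α| ≤ ε₁ := by
  set K : ℝ := β / (β - ρ ^ n) * ((2 * ρ) ^ n * (|C₀| * (d + 1) ^ n))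
  have hK₀ : 0 ≤ K := by
    have := sub_pos.2 hβ
    have : 0 ≤ β := (Real.rpow_nonneg (by linarith) n).trans hβ.le
    positivity
  refine ⟨K + 1, K + 1, by positivity, by positivity, fun μ R₀ hR hμ α hα hδ => ?_⟩
  obtain ⟨j, hj, hdoubling, hlower, hupper⟩ :=
    exists_dilate_pow_isDoublingWith_edelta_mem_Icc hn hρ hβ hR hμ (by linarith) hδ
  have hside : ρ * R₀.side ≤ (R₀.dilate (ρ ^ j)).side :=
    mul_le_mul_of_nonneg_right (le_self_pow₀ hρ.le hj) hR.le
  have hle : R₀.side ≤ (R₀.dilate (ρ ^ j)).side :=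
    (le_mul_of_one_le_left hR.le hρ.le).trans hside
  refine ⟨R₀.dilate (ρ ^ j), rfl, Cube.toSet_subset_toSet rfl hle, hside, hdoubling, ?_⟩
  rw [cdelta_eq_toReal_edelta (Q := R₀) (R := R₀.dilate (ρ ^ j)) rfl hle, abs_le]
  constructor <;> linarith

/-- Precise existence of big doubling cubes: if `δ(R₀, ℝ^d) > α > γ₀`, there is a
doubling cube `S ⊃ R₀` concentric with `R₀`, with `ℓ(S) ≥ 2ℓ(R₀)`, such that
`|δ(R₀,S) − α| ≤ ε₁`, where `ε₁` does not depend on `α`. -/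
theorem exists_big_doubling_cube_prescribed_delta {d : ℕ} (n C₀ : ℝ)
    (hn : 0 < n) (hnd : n ≤ d) :
    ∃ γ₀ ε₁ : ℝ, 0 < γ₀ ∧ 0 < ε₁ ∧
      ∀ (μ : Measure (Euc d)) [IsLocallyFiniteMeasure μ], GrowthCond μ C₀ n →
      ∀ α : ℝ, γ₀ < α →
      ∀ R₀ : Cube d, IsCube μ R₀ →
        ENNReal.ofReal α < deltaFull μ n R₀ →
        ∃ S : Cube d, S.center = R₀.center ∧ R₀.toSet ⊆ S.toSet ∧
          2 * R₀.side ≤ S.side ∧ IsDoubling μ S ∧ |cdelta μ n R₀ S - α| ≤ ε₁ := by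
  have : NeZero d := ⟨Nat.cast_ne_zero.1 (hn.trans_le hnd).ne'⟩
  have hβ : (2 : ℝ) ^ n < 2 ^ (d + 1) := by
    rw [← Real.rpow_natCast]
    exact Real.rpow_lt_rpow_of_exponent_lt one_lt_two (hnd.trans_lt (by simp))
  obtain ⟨γ₀, ε₁, hγ₀, hε₁, h⟩ := exists_big_doubling_cube_prescribed_delta_general
    (d := d) n C₀ 2 (2 ^ (d + 1)) hn.le one_lt_two hβ
  simp only [isDoubling_iff_isDoublingWith]
  exact ⟨γ₀, ε₁, hγ₀, hε₁, fun μ _ hμ α hα R₀ hR => h μ R₀ hR.2 (hμ _ hR.1) α hα⟩
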